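/- Let k and t be positive integers with k ≥ 4. There exists a constant C = C(k,t) such that for every positive integer n, ex_k(n, P^{(k)}_{2t+1}) ≤ ex_k(n, P^{(k)}_{2t+2}) ≤ t·C(n−1,k−1) + C·n^{k−2}. -/

import Mathlib

open Finset

/-- The family `F` of k-sets contains a k-uniform linear path of length ℓ:
distinct members `P 0, …, P (ℓ-1)` with consecutive members meeting in exactly one
vertex and non-consecutive members disjoint. -/
def ContainsLinearPath (k ℓ : ℕ) {n : ℕ} (F : Finset (Finset (Fin n))) : Prop :=
  ∃ P : Fin ℓ → Finset (Fin n), Function.Injective P ∧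
    (∀ i, P i ∈ F) ∧ (∀ i, (P i).card = k) ∧
    (∀ i j : Fin ℓ, (i : ℕ) + 1 = (j : ℕ) → (P i ∩ P j).card = 1) ∧
    (∀ i j : Fin ℓ, (i : ℕ) + 1 < (j : ℕ) → P i ∩ P j = ∅)

/-- The Turán number ex_k(n, P^{(k)}_ℓ): the maximum number of edges in a k-uniform
hypergraph on n vertices containing no linear path of length ℓ. -/
noncomputable def exLinear (k ℓ n : ℕ) : ℕ :=
  sSup {m : ℕ | ∃ F : Finset (Finset (Fin n)),
    (∀ A ∈ F, A.card = k) ∧ ¬ ContainsLinearPath k ℓ F ∧ F.card = m}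

/-!
The proof is Füredi's delta-system method. Up to a constant factor and `O(n ^ (k - 2))` edges, a
`k`-uniform family contains a homogeneous one: it is `k`-partite, the colour sets of its kernels
(the sets `A` for which members containing `A` can avoid any few other vertices) are the same for
all edges and closed under intersection, and every `(k - 2)`-set of colours lies in one of them
other than the full set. For `k ≥ 4` such a structure either contains two singletons, so that
linear paths of any length can be built greedily, or all pairs through some colour.

Hence in a family without a linear path of length `2t + 2` all but `O(n ^ (k - 2))` edges `F` are
stars in the graph of pairs that are kernels, and this graph has no path of length `2t + 2`, as it
would expand to a linear path. Charge such an `F`, centred at `x`, to `F \ {x}`. Each `(k - 1)`-set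
with at most `t` common neighbours is charged at most `t` times, which gives the main term. If more
than `O(n ^ (k - 2))` edges had `t + 1` common neighbours of `F \ {x}`, these neighbours would be
the inner vertices of a path of length `2t + 2` alternating between them and vertices of edges.
-/

open scoped Nat

section Kernels

variable {V : Type*} [DecidableEq V] {w d k : ℕ} {G H K : Finset (Finset V)} {A F : Finset V}

/-- `A` is a `w`-kernel of the family `G`: whichever `w` vertices are forbidden, some member of `G`
contains `A` and avoids the forbidden vertices outside `A`. This plays the role of the kernel of a
large sunflower in `G`, and is what lets linear paths be extended greedily. -/
def IsKernel (w : ℕ) (G : Finset (Finset V)) (A : Finset V) : Prop :=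
  ∀ W : Finset V, #W ≤ w → ∃ F ∈ G, A ⊆ F ∧ F ∩ W ⊆ A

/-- Every subset of `F` of codimension `d` extends to a `w`-kernel of `G` properly contained
in `F`. All but `O(n ^ (k - d))` members of a `k`-uniform family have this property. -/
def IsKernelCovered (w d : ℕ) (G : Finset (Finset V)) (F : Finset V) : Prop :=
  ∀ A ⊆ F, #A + d = #F → ∃ B, A ⊆ B ∧ B ⊂ F ∧ IsKernel w G B

lemma IsKernel.mono (hA : IsKernel w G A) (hGH : G ⊆ H) : IsKernel w H A := fun W hW ↦
  let ⟨F, hF, hAF⟩ := hA W hW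
  ⟨F, hGH hF, hAF⟩

lemma exists_hitting_set_of_not_isKernel (hA : ¬ IsKernel w G A) :
    ∃ W : Finset V, #W ≤ w ∧ ∀ F ∈ G, A ⊆ F → ∃ u ∈ W, u ∈ F \ A := by
  unfold IsKernel at hA
  push Not at hA
  obtain ⟨W, hW, hA⟩ := hA
  refine ⟨W, hW, fun F hF hAF ↦ ?_⟩
  obtain ⟨u, hu, huA⟩ := not_subset.1 (hA F hF hAF)
  exact ⟨u, mem_of_mem_inter_right hu, mem_sdiff.2 ⟨mem_of_mem_inter_left hu, huA⟩⟩

-- Branch over a hitting set for `A`: each of its at most `w` vertices can be added to `A`,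
-- and the extended set is again not a kernel until all of `F` is reached.
lemma card_le_pow_of_no_kernel_between (hKG : K ⊆ G) (hA : ∀ F ∈ K, A ⊆ F)
    (hcard : ∀ F ∈ K, #A + d = #F)
    (hker : ∀ F ∈ K, ∀ B, A ⊆ B → B ⊂ F → ¬ IsKernel w G B) : #K ≤ w ^ d := by
  induction d generalizing A K with
  | zero =>
    have hK : K ⊆ {A} := fun F hF ↦
      mem_singleton.2 (eq_of_subset_of_card_le (hA F hF) (hcard F hF).ge).symm
    simpa using card_le_card hK
  | succ d ih =>
    rcases K.eq_empty_or_nonempty with rfl | ⟨F₀, hF₀⟩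
    · simp
    have hAF₀ : A ⊂ F₀ := ssubset_of_subset_of_ne (hA F₀ hF₀) fun h ↦ by
      have := hcard F₀ hF₀
      rw [h] at this
      omega
    obtain ⟨W, hW, hhit⟩ := exists_hitting_set_of_not_isKernel (hker F₀ hF₀ A Subset.rfl hAF₀)
    have hcover : K ⊆ W.biUnion fun u ↦ {F ∈ K | u ∈ F \ A} := fun F hF ↦
      let ⟨u, hu, huF⟩ := hhit F (hKG hF) (hA F hF)
      mem_biUnion.2 ⟨u, hu, mem_filter.2 ⟨hF, huF⟩⟩
    have hbranch : ∀ u ∈ W, #{F ∈ K | u ∈ F \ A} ≤ w ^ d := by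
      intro u _
      refine ih (A := insert u A) ((filter_subset _ _).trans hKG) ?_ ?_ ?_ <;>
        simp only [mem_filter, mem_sdiff] <;> rintro F ⟨hF, huF, huA⟩
      · exact insert_subset huF (hA F hF)
      · rw [card_insert_of_notMem huA, ← hcard F hF]
        ring
      · exact fun B hB ↦ hker F hF B ((subset_insert u A).trans hB)
    calc #K ≤ #W * w ^ d := (card_le_card hcover).trans (card_biUnion_le_card_mul _ _ _ hbranch)
      _ ≤ w ^ (d + 1) := by rw [pow_succ']; gcongr

lemma card_le_of_forall_not_isKernelCovered [Fintype V] (hKG : K ⊆ G)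
    (hK : (K : Set (Finset V)).Sized k) (hcov : ∀ F ∈ K, ¬ IsKernelCovered w d G F) :
    #K ≤ w ^ d * (Fintype.card V).choose (k - d) := by
  have huncovered : ∀ F ∈ K, ∃ A ⊆ F, #A + d = #F ∧
      ∀ B, A ⊆ B → B ⊂ F → ¬ IsKernel w G B := by
    simpa only [IsKernelCovered, not_forall, not_exists, not_and, exists_prop] using hcov
  choose! A hAF hAcard hAker using huncovered
  rw [← card_univ, ← card_powersetCard]
  refine card_le_mul_card_image_of_maps_to (f := A) (fun F hF ↦ ?_) _ fun B _ ↦ ?_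
  · have := hK hF
    have := hAcard F hF
    exact mem_powersetCard.2 ⟨subset_univ _, by omega⟩
  · refine card_le_pow_of_no_kernel_between (A := B) ((filter_subset _ _).trans hKG) ?_ ?_ ?_ <;>
      simp only [mem_filter] <;> rintro F ⟨hF, rfl⟩
    exacts [hAF F hF, hAcard F hF, hAker F hF]

end Kernels

section Colorings

lemma exists_bijOn_univ_of_card_eq {V α : Type*} [Fintype α] [Nonempty α] {F : Finset V}
    (hF : #F = Fintype.card α) : ∃ g : V → α, Set.BijOn g F Set.univ := by
  classical
  let e : F ≃ α := Fintype.equivOfCardEq (by simpa using hF)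
  refine ⟨fun v ↦ if h : v ∈ F then e ⟨v, h⟩ else Classical.arbitrary α, fun _ _ ↦ trivial, ?_, ?_⟩
  · intro a ha b hb hab
    rw [mem_coe] at ha hb
    simpa [ha, hb] using hab
  · intro y _
    exact ⟨e.symm y, (e.symm y).2, by simp⟩

variable {V α ι : Type*} [Fintype V] [DecidableEq V] [Fintype α] [DecidableEq α]

lemma card_filter_agree_mul_pow (S : Finset V) (g : V → α) :
    #{c : V → α | ∀ v ∈ S, c v = g v} * Fintype.card α ^ #S =
      Fintype.card α ^ Fintype.card V := by
  have hpi : ({c : V → α | ∀ v ∈ S, c v = g v} : Finset (V → α)) =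
      Fintype.piFinset fun v ↦ if v ∈ S then {g v} else univ := by
    ext c
    simp only [mem_filter, mem_univ, true_and, Fintype.mem_piFinset]
    refine forall_congr' fun v ↦ ?_
    split_ifs with hv <;> simp [hv]
  have hfiber : ∀ v, #(if v ∈ S then {g v} else (univ : Finset α)) =
      if v ∈ S then 1 else Fintype.card α := fun v ↦ by split_ifs <;> simp
  rw [hpi, Fintype.card_piFinset, prod_congr rfl fun v _ ↦ hfiber v, prod_ite, prod_const_one,
    one_mul, prod_const, ← pow_add, ← card_compl_add_card S]
  congr 3
  ext v
  simp

-- A uniformly random `c` agrees with `g i` on `S i` with probability at least `|α| ^ (-m)`.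
lemma exists_coloring_agreeing [Nonempty α] (I : Finset ι) (S : ι → Finset V) (g : ι → V → α)
    {m : ℕ} (hS : ∀ i ∈ I, #(S i) ≤ m) :
    ∃ c : V → α, #I ≤ Fintype.card α ^ m * #{i ∈ I | ∀ v ∈ S i, c v = g i v} := by
  have hagree : ∀ i ∈ I, Fintype.card α ^ Fintype.card V ≤
      Fintype.card α ^ m * #{c : V → α | ∀ v ∈ S i, c v = g i v} := fun i hi ↦ by
    rw [← card_filter_agree_mul_pow (S i) (g i), mul_comm]
    gcongr
    exacts [Fintype.card_pos, hS i hi]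
  have hsum : ∑ _c : V → α, #I ≤
      ∑ c : V → α, Fintype.card α ^ m * #{i ∈ I | ∀ v ∈ S i, c v = g i v} := calc
    ∑ _c : V → α, #I = ∑ _i ∈ I, Fintype.card α ^ Fintype.card V := by
      simp [mul_comm]
    _ ≤ ∑ i ∈ I, Fintype.card α ^ m * #{c : V → α | ∀ v ∈ S i, c v = g i v} :=
      sum_le_sum hagree
    _ = ∑ c : V → α, Fintype.card α ^ m * #{i ∈ I | ∀ v ∈ S i, c v = g i v} := by
      rw [← mul_sum, ← mul_sum]
      congr 1
      exact sum_card_bipartiteAbove_eq_sum_card_bipartiteBelow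
        fun i (c : V → α) ↦ ∀ v ∈ S i, c v = g i v
  obtain ⟨c, -, hc⟩ := exists_le_of_sum_le univ_nonempty hsum
  exact ⟨c, hc⟩

end Colorings

lemma exists_rainbow_subfamily {V α : Type*} [Finite V] [Fintype α] [Nonempty α]
    {G : Finset (Finset V)} (hG : (G : Set (Finset V)).Sized (Fintype.card α)) :
    ∃ c : V → α, ∃ R ⊆ G, (∀ F ∈ R, Set.BijOn c F Set.univ) ∧
      #G ≤ Fintype.card α ^ Fintype.card α * #R := by
  classical
  have := Fintype.ofFinite V
  have hbij : ∀ F ∈ G, ∃ g : V → α, Set.BijOn g F Set.univ := fun F hF ↦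
    exists_bijOn_univ_of_card_eq (hG hF)
  choose! g hg using hbij
  obtain ⟨c, hc⟩ := exists_coloring_agreeing G id g fun F hF ↦ (hG hF).le
  refine ⟨c, _, filter_subset _ _, fun F hF ↦ ?_, hc⟩
  obtain ⟨hFG, hcF⟩ := mem_filter.1 hF
  exact (hg F hFG).congr fun v hv ↦ (hcF v hv).symm

section Homogeneity

variable {V α : Type*} [DecidableEq α] {w d x : ℕ} {c : V → α} {G H D : Finset (Finset V)}
  {J : Finset (Finset α)} {A B F F' : Finset V} {S T : Finset α}

/-- The vertices of `F` whose colour lies in `S`: with all of `F` coloured differently, this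
identifies subsets of `F` with sets of colours and so allows comparing different members. -/
def colorPart (c : V → α) (F : Finset V) (S : Finset α) : Finset V := {v ∈ F | c v ∈ S}

lemma mem_colorPart {v : V} : v ∈ colorPart c F S ↔ v ∈ F ∧ c v ∈ S := mem_filter

lemma colorPart_subset : colorPart c F S ⊆ F := filter_subset _ _

lemma colorPart_image (hF : Set.InjOn c F) (hB : B ⊆ F) : colorPart c F (B.image c) = B := by
  ext v
  simp only [mem_colorPart, mem_image]
  constructor
  · rintro ⟨hv, u, hu, huv⟩
    rwa [← hF (hB hu) hv huv]
  · exact fun hv ↦ ⟨hB hv, v, hv, rfl⟩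

lemma image_colorPart (hF : Set.SurjOn c F Set.univ) : (colorPart c F S).image c = S := by
  ext y
  simp only [mem_image, mem_colorPart]
  constructor
  · rintro ⟨v, ⟨-, hv⟩, rfl⟩
    exact hv
  · intro hy
    obtain ⟨v, hv, rfl⟩ := hF (Set.mem_univ y)
    exact ⟨v, ⟨hv, hy⟩, rfl⟩

lemma card_colorPart (hF : Set.BijOn c F Set.univ) : #(colorPart c F S) = #S := by
  rw [← card_image_of_injOn (hF.injOn.mono (coe_subset.2 colorPart_subset)),
    image_colorPart hF.surjOn]

lemma colorPart_eq_of_subset (hF : Set.SurjOn c F Set.univ) (hF' : Set.InjOn c F')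
    (h : colorPart c F S ⊆ F') : colorPart c F' S = colorPart c F S := by
  refine Subset.antisymm (fun v hv ↦ ?_) fun v hv ↦
    mem_colorPart.2 ⟨h hv, (mem_colorPart.1 hv).2⟩
  obtain ⟨hvF', hvS⟩ := mem_colorPart.1 hv
  obtain ⟨u, hu, huv⟩ := hF (Set.mem_univ (c v))
  have hmem : u ∈ colorPart c F S := mem_colorPart.2 ⟨hu, huv ▸ hvS⟩
  rwa [← hF' (h hmem) hvF' huv]

variable [DecidableEq V]

/-- Whether the `S`-coloured part of a member of `H` is a `w`-kernel of `H` does not depend on the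
member: it is one exactly when `S ∈ J`. This is Füredi's notion of a homogeneous family, with `J`
its intersection structure. -/
def IsKernelHomogeneous (w : ℕ) (c : V → α) (H : Finset (Finset V)) (J : Finset (Finset α)) :
    Prop :=
  ∀ F ∈ H, ∀ S, IsKernel w H (colorPart c F S) ↔ S ∈ J

lemma not_isKernel_union_filter_colorPart_eq (hG : ∀ F ∈ G, Set.BijOn c F Set.univ)
    (hA : ¬ IsKernel w G A) (hDG : D ⊆ G) (hD : ∀ F ∈ D, colorPart c F S ≠ A)
    (hDker : ∀ F ∈ D, ¬ IsKernel w D (colorPart c F S)) :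
    ∀ F ∈ D ∪ {F ∈ G | colorPart c F S = A},
      ¬ IsKernel w (D ∪ {F ∈ G | colorPart c F S = A}) (colorPart c F S) := by
  intro F hF hker
  rcases mem_union.1 hF with hFD | hFA
  · refine hDker F hFD fun W hW ↦ ?_
    obtain ⟨F', hF', hsub, hinter⟩ := hker W hW
    refine ⟨F', (mem_union.1 hF').resolve_right fun hF'A ↦ hD F hFD ?_, hsub, hinter⟩
    obtain ⟨hF'G, hF'A⟩ := mem_filter.1 hF'A
    rw [← hF'A, colorPart_eq_of_subset (hG F (hDG hFD)).surjOn (hG F' hF'G).injOn hsub]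
  · rw [(mem_filter.1 hFA).2] at hker
    exact hA (hker.mono (union_subset hDG (filter_subset _ _)))

-- Delete, for as long as some part of colours `S ∈ 𝒮` fails to be a kernel, all members sharing
-- that part; the members deleted on account of `S` form `D S`.
lemma exists_kernel_peeling (𝒮 : Finset (Finset α)) (hG : ∀ F ∈ G, Set.BijOn c F Set.univ) :
    ∃ H ⊆ G, ∃ D : Finset α → Finset (Finset V), (∀ S, D S ⊆ G) ∧ G ⊆ H ∪ 𝒮.biUnion D ∧
      (∀ F ∈ H, ∀ S ∈ 𝒮, IsKernel w H (colorPart c F S)) ∧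
      ∀ S, ∀ F ∈ D S, ¬ IsKernel w (D S) (colorPart c F S) := by
  induction G using Finset.strongInduction with
  | H G ih =>
  by_cases hall : ∀ F ∈ G, ∀ S ∈ 𝒮, IsKernel w G (colorPart c F S)
  · exact ⟨G, Subset.rfl, fun _ ↦ ∅, by simp, subset_union_left, hall, by simp⟩
  push Not at hall
  obtain ⟨F₀, hF₀, S₀, hS₀, hker⟩ := hall
  let X := {F ∈ G | colorPart c F S₀ = colorPart c F₀ S₀}
  have hXG : X ⊆ G := filter_subset _ _
  obtain ⟨H, hHG, D, hDG, hGHD, hH, hD⟩ := ih (G \ X)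
    (sdiff_ssubset hXG ⟨F₀, mem_filter.2 ⟨hF₀, rfl⟩⟩) fun F hF ↦ hG F (sdiff_subset hF)
  have hDG' : ∀ S, D S ⊆ G := fun S ↦ (hDG S).trans sdiff_subset
  refine ⟨H, hHG.trans sdiff_subset, Function.update D S₀ (D S₀ ∪ X), fun S ↦ ?_, fun F hF ↦ ?_,
    hH, fun S ↦ ?_⟩
  · rcases eq_or_ne S S₀ with rfl | hS
    · simpa using union_subset (hDG' S) hXG
    · simpa [hS] using hDG' S
  · by_cases hFX : F ∈ X
    · exact mem_union_right _ (mem_biUnion.2 ⟨S₀, hS₀, by simp [hFX]⟩)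
    · refine union_subset_union_right (biUnion_mono fun S _ ↦ ?_) (hGHD (mem_sdiff.2 ⟨hF, hFX⟩))
      rcases eq_or_ne S S₀ with rfl | hS <;> simp [*]
  · rcases eq_or_ne S S₀ with rfl | hS
    · simp only [Function.update_self]
      exact not_isKernel_union_filter_colorPart_eq hG hker (hDG' S)
        (fun F hF hFX ↦ (mem_sdiff.1 (hDG S hF)).2 (mem_filter.2 ⟨hDG' S hF, hFX⟩)) (hD S)
    · simpa only [Function.update_of_ne hS] using hD S

-- Induction on the set `𝒮` of colour sets that may still be kernels: each of the `#𝒮 + 1` pieces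
-- of the peeling is either homogeneous or has lost one of them.
lemma card_le_factorial_mul_of_homogeneous_card_le (𝒮 : Finset (Finset α))
    (hG : ∀ F ∈ G, Set.BijOn c F Set.univ)
    (h𝒮 : ∀ F ∈ G, ∀ S ∉ 𝒮, ¬ IsKernel w G (colorPart c F S))
    (hx : ∀ H ⊆ G, ∀ J, IsKernelHomogeneous w c H J → #H ≤ x) : #G ≤ (#𝒮 + 1)! * x := by
  induction 𝒮 using Finset.strongInduction generalizing G with
  | H 𝒮 ih =>
  obtain ⟨H, hHG, D, hDG, hGHD, hH, hD⟩ := exists_kernel_peeling (w := w) 𝒮 hG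
  have hHx : #H ≤ x := hx H hHG 𝒮 fun F hF S ↦
    ⟨fun hker ↦ by_contra fun hS ↦ h𝒮 F (hHG hF) S hS (hker.mono hHG), hH F hF S⟩
  have hDx : ∀ S ∈ 𝒮, #(D S) ≤ (#𝒮)! * x := fun S hS ↦ by
    rw [← card_erase_add_one hS]
    refine ih _ (erase_ssubset hS) (fun F hF ↦ hG F (hDG S hF)) (fun F hF T hT hker ↦ ?_)
      fun H hH ↦ hx H (hH.trans (hDG S))
    rcases eq_or_ne T S with rfl | hTS
    · exact hD T F hF hker
    · exact h𝒮 F (hDG S hF) T (fun h ↦ hT (mem_erase.2 ⟨hTS, h⟩)) (hker.mono (hDG S))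
  calc #G ≤ #H + #(𝒮.biUnion D) := (card_le_card hGHD).trans (card_union_le _ _)
    _ ≤ x + #𝒮 * ((#𝒮)! * x) := add_le_add hHx (card_biUnion_le_card_mul _ _ _ hDx)
    _ ≤ (#𝒮)! * x + #𝒮 * ((#𝒮)! * x) := by
      gcongr
      exact Nat.le_mul_of_pos_left x (Nat.factorial_pos _)
    _ = (#𝒮 + 1)! * x := by rw [Nat.factorial_succ]; ring

lemma IsKernelHomogeneous.inter_mem (hH : IsKernelHomogeneous w c H J) (hne : H.Nonempty)
    (hS : S ∈ J) (hT : T ∈ J) : S ∩ T ∈ J := by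
  obtain ⟨F, hF⟩ := hne
  refine (hH F hF _).1 fun W hW ↦ ?_
  obtain ⟨F₁, hF₁, hsub₁, hinter₁⟩ := (hH F hF S).2 hS W hW
  obtain ⟨F₂, hF₂, hsub₂, hinter₂⟩ := (hH F₁ hF₁ T).2 hT W hW
  refine ⟨F₂, hF₂, fun v hv ↦ ?_, fun v hv ↦ ?_⟩
  · obtain ⟨hvF, hvST⟩ := mem_colorPart.1 hv
    obtain ⟨hvS, hvT⟩ := mem_inter.1 hvST
    exact hsub₂ (mem_colorPart.2 ⟨hsub₁ (mem_colorPart.2 ⟨hvF, hvS⟩), hvT⟩)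
  · obtain ⟨hvF₁, hvT⟩ := mem_colorPart.1 (hinter₂ hv)
    obtain ⟨hvF, hvS⟩ := mem_colorPart.1
      (hinter₁ (mem_inter.2 ⟨hvF₁, mem_of_mem_inter_right hv⟩))
    exact mem_colorPart.2 ⟨hvF, mem_inter.2 ⟨hvS, hvT⟩⟩

lemma IsKernelHomogeneous.isKernel_iff_image_mem (hH : IsKernelHomogeneous w c H J) (hF : F ∈ H)
    (hinj : Set.InjOn c F) (hB : B ⊆ F) : IsKernel w H B ↔ B.image c ∈ J := by
  rw [← hH F hF, colorPart_image hinj hB]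

variable [Fintype α]

lemma IsKernelHomogeneous.isKernelCovered_iff (hH : IsKernelHomogeneous w c H J) (hF : F ∈ H)
    (hbij : Set.BijOn c F Set.univ) :
    IsKernelCovered w d H F ↔
      ∀ S : Finset α, #S + d = Fintype.card α → ∃ T ∈ J, S ⊆ T ∧ T ≠ univ := by
  have hFcard : #F = Fintype.card α := by
    rw [← card_univ, ← card_colorPart hbij (S := univ)]
    simp [colorPart]
  constructor
  · intro hcov S hS
    obtain ⟨B, hSB, hBF, hB⟩ := hcov (colorPart c F S) colorPart_subset
      (by rw [card_colorPart hbij, hS, hFcard])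
    refine ⟨B.image c, (hH.isKernel_iff_image_mem hF hbij.injOn hBF.1).1 hB, ?_, fun huniv ↦ ?_⟩
    · rw [← image_colorPart (S := S) hbij.surjOn]
      exact image_subset_image hSB
    · have := card_image_le (s := B) (f := c)
      have := card_lt_card hBF
      rw [huniv, card_univ] at *
      omega
  · intro hJ A hAF hA
    obtain ⟨T, hTJ, hAT, hT⟩ := hJ (A.image c)
      (by rw [card_image_of_injOn (hbij.injOn.mono (coe_subset.2 hAF)), hA, hFcard])
    refine ⟨colorPart c F T, fun v hv ↦ mem_colorPart.2 ⟨hAF hv, hAT (mem_image_of_mem c hv)⟩,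
      ssubset_of_subset_of_ne colorPart_subset fun h ↦ hT ?_, (hH F hF T).2 hTJ⟩
    rw [← card_eq_iff_eq_univ, ← card_colorPart hbij, h, hFcard]

end Homogeneity

section HomogeneousSubfamily

variable {V : Type*} [Fintype V] [DecidableEq V] {w d k : ℕ} {G : Finset (Finset V)}

/-- The factor lost in `exists_homogeneous_covered_subfamily`: `k ^ k` in making the family
`k`-partite, `(2 ^ k + 1)!` in making it homogeneous, and `w ^ d` for uncovered edges. -/
def homogeneityConst (k w d : ℕ) : ℕ := k ^ k * (2 ^ k + 1)! * w ^ d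

lemma exists_homogeneous_covered_subfamily (hk : 0 < k) (hG : (G : Set (Finset V)).Sized k)
    (hlarge : homogeneityConst k w d * (Fintype.card V).choose (k - d) < #G) :
    ∃ H ⊆ G, H.Nonempty ∧ (∀ F ∈ H, IsKernelCovered w d H F) ∧
      ∃ (c : V → Fin k) (J : Finset (Finset (Fin k))),
        (∀ F ∈ H, Set.BijOn c F Set.univ) ∧ IsKernelHomogeneous w c H J := by
  have : Nonempty (Fin k) := ⟨⟨0, hk⟩⟩
  obtain ⟨c, R, hRG, hR, hGR⟩ := exists_rainbow_subfamily (α := Fin k) (G := G) (by simpa using hG)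
  by_contra! hcontra
  have hsmall : ∀ H ⊆ R, ∀ J, IsKernelHomogeneous w c H J →
      #H ≤ w ^ d * (Fintype.card V).choose (k - d) := by
    intro H hHR J hH
    refine card_le_of_forall_not_isKernelCovered Subset.rfl (hG.mono (hHR.trans hRG))
      fun F hF hcov ↦ hcontra H (hHR.trans hRG) ⟨F, hF⟩ (fun F' hF' ↦ ?_) c J
        (fun F hF ↦ hR F (hHR hF)) hH
    rw [hH.isKernelCovered_iff hF (hR F (hHR hF))] at hcov
    rwa [hH.isKernelCovered_iff hF' (hR F' (hHR hF'))]
  have hRcard : #R ≤ (2 ^ k + 1)! * (w ^ d * (Fintype.card V).choose (k - d)) := by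
    simpa using card_le_factorial_mul_of_homogeneous_card_le univ hR (by simp) hsmall
  refine hlarge.not_ge ?_
  calc #G ≤ k ^ k * #R := by simpa using hGR
    _ ≤ k ^ k * ((2 ^ k + 1)! * (w ^ d * (Fintype.card V).choose (k - d))) := by gcongr
    _ = homogeneityConst k w d * (Fintype.card V).choose (k - d) := by
      rw [homogeneityConst]; ring

end HomogeneousSubfamily

section IntersectionClosed

variable {α : Type*} [Fintype α] [DecidableEq α] {J : Finset (Finset α)} {T : Finset α}

lemma mem_of_forall_separated (hinter : ∀ A ∈ J, ∀ B ∈ J, A ∩ B ∈ J) (hT : T ≠ univ)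
    (hsep : ∀ a ∉ T, ∃ U ∈ J, T ⊆ U ∧ a ∉ U) : T ∈ J := by
  choose! U hUJ hTU haU using hsep
  have hne : Tᶜ.Nonempty := by simpa [nonempty_iff_ne_empty] using hT
  have hTinf : T = Tᶜ.inf' hne U := by
    refine Subset.antisymm (le_inf' hne U fun a ha ↦ hTU a (mem_compl.1 ha)) fun a ha ↦ ?_
    by_contra haT
    exact haU a haT (inf'_le U (mem_compl.2 haT) ha)
  rw [hTinf]
  exact inf'_mem (J : Set (Finset α)) hinter Tᶜ hne U fun a ha ↦ hUJ a (mem_compl.1 ha)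

lemma singleton_mem_of_compl_singleton_notMem (hinter : ∀ A ∈ J, ∀ B ∈ J, A ∩ B ∈ J)
    (hcov : ∀ S : Finset α, #S + 2 = Fintype.card α → ∃ T ∈ J, S ⊆ T ∧ T ≠ univ)
    {a b y : α} (hab : a ≠ b) (ha : {a}ᶜ ∉ J) (hb : {b}ᶜ ∉ J) (hya : y ≠ a) (hyb : y ≠ b) :
    {y} ∈ J := by
  refine mem_of_forall_separated hinter (fun h ↦ ?_) fun z hz ↦ ?_
  · exact hya (mem_singleton.1 (h ▸ mem_univ a)).symm
  rw [mem_singleton] at hz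
  obtain ⟨e, hez, hey, he⟩ : ∃ e, z ≠ e ∧ y ≠ e ∧ {e}ᶜ ∉ J := by
    by_cases hza : z = a
    · exact ⟨b, hza ▸ hab, hyb, hb⟩
    · exact ⟨a, hza, hya, ha⟩
  obtain ⟨U, hUJ, hsub, hU⟩ := hcov {z, e}ᶜ (by
    rw [← card_pair hez, card_compl_add_card])
  have hmem : ∀ v, v ≠ z → v ≠ e → v ∈ U := fun v hvz hve ↦ hsub (by simp [hvz, hve])
  refine ⟨U, hUJ, by simpa using hmem y (Ne.symm hz) hey, fun hzU ↦ ?_⟩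
  have heU : e ∉ U := fun heU ↦ hU (eq_univ_iff_forall.2 fun v ↦ by
    by_cases hvz : v = z
    · exact hvz ▸ hzU
    by_cases hve : v = e
    · exact hve ▸ heU
    exact hmem v hvz hve)
  refine he ?_
  convert hUJ using 1
  ext v
  simp only [mem_compl, mem_singleton]
  refine ⟨fun hve ↦ ?_, fun hv hve ↦ heU (hve ▸ hv)⟩
  by_cases hvz : v = z
  · exact hvz ▸ hzU
  · exact hmem v hvz hve

lemma pair_mem_of_forall_compl_singleton_mem (hcard : 3 ≤ Fintype.card α)
    (hinter : ∀ A ∈ J, ∀ B ∈ J, A ∩ B ∈ J) {x b : α} (hx : ∀ a ≠ x, {a}ᶜ ∈ J) :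
    {x, b} ∈ J := by
  refine mem_of_forall_separated hinter (fun h ↦ ?_) fun a ha ↦ ?_
  · have := card_le_two (a := x) (b := b)
    rw [h, card_univ] at this
    omega
  · simp only [mem_insert, mem_singleton, not_or] at ha
    refine ⟨{a}ᶜ, hx a ha.1, ?_, by simp⟩
    simpa using ha

lemma exists_star_or_two_singletons_mem (hcard : 4 ≤ Fintype.card α)
    (hinter : ∀ A ∈ J, ∀ B ∈ J, A ∩ B ∈ J)
    (hcov : ∀ S : Finset α, #S + 2 = Fintype.card α → ∃ T ∈ J, S ⊆ T ∧ T ≠ univ) :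
    (∃ x, ∀ b, {x, b} ∈ J) ∨ ∃ y z, y ≠ z ∧ {y} ∈ J ∧ {z} ∈ J := by
  by_cases hx : ∃ x, ∀ a ≠ x, {a}ᶜ ∈ J
  · obtain ⟨x, hx⟩ := hx
    exact .inl ⟨x, fun b ↦ pair_mem_of_forall_compl_singleton_mem (by omega) hinter hx⟩
  push Not at hx
  have : Nonempty α := Fintype.card_pos_iff.1 (by omega)
  obtain ⟨a, -, ha⟩ := hx (Classical.arbitrary α)
  obtain ⟨b, hba, hb⟩ := hx a
  have hrest : 1 < #({a, b}ᶜ : Finset α) := by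
    rw [card_compl, card_pair hba.symm]
    omega
  obtain ⟨y, hy, z, hz, hyz⟩ := one_lt_card.1 hrest
  simp only [mem_compl, mem_insert, mem_singleton, not_or] at hy hz
  exact .inr ⟨y, z, hyz,
    singleton_mem_of_compl_singleton_notMem hinter hcov hba.symm ha hb hy.1 hy.2,
    singleton_mem_of_compl_singleton_notMem hinter hcov hba.symm ha hb hz.1 hz.2⟩

end IntersectionClosed

section LinearPaths

variable {V : Type*} [DecidableEq V] {w k ℓ : ℕ} {E : Finset (Finset V)} {A Q U : Finset V}
  {P : Fin ℓ → Finset V} {u v : V}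

/-- The sets `P 0, …, P (ℓ - 1)` form a linear path, as in `ContainsLinearPath` but over an
arbitrary vertex type and without requiring them to be distinct or of equal size. -/
def IsLinearPath (P : Fin ℓ → Finset V) : Prop :=
  (∀ i j : Fin ℓ, (i : ℕ) + 1 = j → #(P i ∩ P j) = 1) ∧
    ∀ i j : Fin ℓ, (i : ℕ) + 1 < j → P i ∩ P j = ∅

/-- The graph whose edges are the pairs that are `w`-kernels of `E`; its paths expand to linear
paths in `E`. -/
def kernelGraph (w : ℕ) (E : Finset (Finset V)) : SimpleGraph V where
  Adj a b := a ≠ b ∧ IsKernel w E {a, b}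
  symm := ⟨fun a b h ↦ ⟨h.1.symm, pair_comm a b ▸ h.2⟩⟩
  loopless := ⟨fun _ h ↦ h.1 rfl⟩

lemma IsLinearPath.injective (hP : IsLinearPath P) (hcard : ∀ i, 1 < #(P i)) :
    Function.Injective P := by
  have hne : ∀ i j : Fin ℓ, i < j → P i ≠ P j := by
    intro i j hij h
    have hinter : P i ∩ P j = P i := by rw [← h, inter_self]
    have := hcard i
    rcases (Nat.succ_le_of_lt hij).eq_or_lt with hsucc | hlt
    · have := hP.1 i j hsucc
      rw [hinter] at this
      omega
    · have hempty : P i = ∅ := hinter ▸ hP.2 i j hlt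
      rw [hempty, card_empty] at this
      omega
  intro i j hij
  by_contra hne'
  rcases lt_or_gt_of_ne hne' with h | h
  exacts [hne i j h hij, hne j i h hij.symm]

lemma IsLinearPath.cons (hP : IsLinearPath P) (hvQ : v ∈ Q) (hvP : ∀ i, v ∈ P i ↔ (i : ℕ) = 0)
    (hinter : ∀ i, Q ∩ P i ⊆ {v}) :
    IsLinearPath (Fin.cons Q P : Fin (ℓ + 1) → Finset V) := by
  constructor <;> refine Fin.cases (Fin.cases (by simp) fun j hj ↦ ?_) fun i ↦
    Fin.cases (by simp) fun j hj ↦ ?_ <;>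
    simp only [Fin.val_zero, Fin.val_succ, Fin.cons_zero, Fin.cons_succ] at hj ⊢
  · have hvQP : v ∈ Q ∩ P j := mem_inter.2 ⟨hvQ, (hvP j).2 (by omega)⟩
    rw [card_eq_one]
    exact ⟨v, Subset.antisymm (hinter j) (singleton_subset_iff.2 hvQP)⟩
  · exact hP.1 i j (by omega)
  · refine eq_empty_of_forall_notMem fun x hx ↦ ?_
    obtain rfl := mem_singleton.1 (hinter j hx)
    have := (hvP j).1 (mem_of_mem_inter_right hx)
    omega
  · exact hP.2 i j (by omega)

lemma IsKernel.exists_avoiding (hA : IsKernel w E A) (hP : ∀ i, #(P i) = k)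
    (hw : #U + k * ℓ ≤ w) : ∃ Q ∈ E, A ⊆ Q ∧ Q ∩ U ⊆ A ∧ ∀ i, Q ∩ P i ⊆ A := by
  have hcard : #(U ∪ univ.biUnion P) ≤ w := calc
    #(U ∪ univ.biUnion P) ≤ #U + #(univ.biUnion P) := card_union_le _ _
    _ ≤ #U + #(univ : Finset (Fin ℓ)) * k := by
      gcongr
      exact card_biUnion_le_card_mul _ _ _ fun i _ ↦ (hP i).le
    _ ≤ w := by rwa [card_fin, mul_comm]
  obtain ⟨Q, hQ, hAQ, hinter⟩ := hA _ hcard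
  exact ⟨Q, hQ, hAQ, (inter_subset_inter_left subset_union_left).trans hinter, fun i ↦
    (inter_subset_inter_left ((subset_biUnion_of_mem P (mem_univ i)).trans
      subset_union_right)).trans hinter⟩

lemma exists_isLinearPath_of_two_kernel_vertices (hE : (E : Set (Finset V)).Sized k)
    (hne : E.Nonempty)
    (hker : ∀ F ∈ E, ∃ y ∈ F, ∃ z ∈ F, y ≠ z ∧ IsKernel w E {y} ∧ IsKernel w E {z})
    (hw : k * ℓ ≤ w) :
    ∃ P : Fin (ℓ + 1) → Finset V, IsLinearPath P ∧ (∀ i, P i ∈ E) ∧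
      ∃ v, IsKernel w E {v} ∧ ∀ i, v ∈ P i ↔ (i : ℕ) = 0 := by
  induction ℓ with
  | zero =>
    obtain ⟨F, hF⟩ := hne
    obtain ⟨y, hy, -, -, -, hyker, -⟩ := hker F hF
    exact ⟨fun _ ↦ F, ⟨fun i j h ↦ by omega, fun i j h ↦ by omega⟩, fun _ ↦ hF, y, hyker, by simpa⟩
  | succ ℓ ih =>
    obtain ⟨P, hP, hPE, v, hv, hvP⟩ := ih (by rw [mul_add] at hw; omega)
    obtain ⟨Q, hQ, hvQ, -, hinter⟩ := hv.exists_avoiding (U := ∅) (fun i ↦ hE (hPE i)) (by simpa)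
    rw [singleton_subset_iff] at hvQ
    obtain ⟨x, hxQ, hxv, hx⟩ : ∃ x ∈ Q, x ≠ v ∧ IsKernel w E {x} := by
      obtain ⟨y, hy, z, hz, hyz, hyker, hzker⟩ := hker Q hQ
      by_cases hyv : y = v
      · exact ⟨z, hz, hyv ▸ hyz.symm, hzker⟩
      · exact ⟨y, hy, hyv, hyker⟩
    refine ⟨Fin.cons Q P, hP.cons hvQ hvP hinter, Fin.cases hQ hPE, x, hx, Fin.cases (by simpa) ?_⟩
    intro i
    simpa using fun hxP ↦ hxv (mem_singleton.1 (hinter i (mem_inter.2 ⟨hxQ, hxP⟩)))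

lemma exists_isLinearPath_of_isPath_kernelGraph (hE : (E : Set (Finset V)).Sized k)
    {p : (kernelGraph w E).Walk u v} (hp : p.IsPath) (hpU : ∀ x ∈ p.support, x ∈ U)
    (hw : #U + k * p.length ≤ w) :
    ∃ P : Fin p.length → Finset V, IsLinearPath P ∧ (∀ i, P i ∈ E) ∧
      (∀ i, u ∈ P i ↔ (i : ℕ) = 0) ∧ ∀ i, ∀ x ∈ P i, x ∈ U → x ∈ p.support := by
  induction p with
  | nil => exact ⟨Fin.elim0, ⟨fun i ↦ i.elim0, fun i ↦ i.elim0⟩, fun i ↦ i.elim0,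
      fun i ↦ i.elim0, fun i ↦ i.elim0⟩
  | @cons u u' v h p ih =>
    obtain ⟨hp, hup⟩ := SimpleGraph.Walk.cons_isPath_iff h p |>.1 hp
    simp only [SimpleGraph.Walk.support_cons, List.forall_mem_cons] at hpU
    rw [SimpleGraph.Walk.length_cons, mul_add] at hw
    obtain ⟨P, hP, hPE, hu'P, hPU⟩ := ih hp hpU.2 (by omega)
    have huP : ∀ i, u ∉ P i := fun i hui ↦ hup (hPU i u hui hpU.1)
    obtain ⟨Q, hQ, hsub, hQU, hQP⟩ := h.2.exists_avoiding (U := U) (fun i ↦ hE (hPE i)) (by omega)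
    simp only [insert_subset_iff, singleton_subset_iff] at hsub
    have hinter : ∀ i, Q ∩ P i ⊆ {u'} := fun i x hx ↦ by
      rcases mem_insert.1 (hQP i hx) with rfl | hxu'
      exacts [absurd (mem_of_mem_inter_right hx) (huP i), hxu']
    refine ⟨Fin.cons Q P, hP.cons hsub.2 hu'P hinter, Fin.cases hQ hPE, Fin.cases ?_ ?_,
      Fin.cases (fun x hx hxU ↦ ?_) fun i x hx hxU ↦ ?_⟩
    · simpa using hsub.1
    · simpa using huP
    · have := hQU (mem_inter.2 ⟨hx, hxU⟩)
      rw [mem_insert, mem_singleton] at this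
      rcases this with rfl | rfl <;> simp
    · exact List.mem_cons_of_mem _ (hPU i x hx hxU)

end LinearPaths

section ContainsLinearPath

variable {n k ℓ w : ℕ} {E H : Finset (Finset (Fin n))}

lemma IsLinearPath.containsLinearPath {P : Fin ℓ → Finset (Fin n)} (hP : IsLinearPath P)
    (hk : 2 ≤ k) (hE : (E : Set (Finset (Fin n))).Sized k) (hPE : ∀ i, P i ∈ E) :
    ContainsLinearPath k ℓ E :=
  have hcard : ∀ i, #(P i) = k := fun i ↦ hE (hPE i)
  ⟨P, hP.injective fun i ↦ by rw [hcard i]; omega, hPE, hcard, hP.1, hP.2⟩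

lemma ContainsLinearPath.of_succ (h : ContainsLinearPath k (ℓ + 1) E) :
    ContainsLinearPath k ℓ E := by
  obtain ⟨P, hinj, hPE, hcard, hadj, hdisj⟩ := h
  exact ⟨P ∘ Fin.castSucc, hinj.comp (Fin.castSucc_injective ℓ), fun _ ↦ hPE _, fun _ ↦ hcard _,
    fun i j h ↦ hadj _ _ (by simpa using h), fun i j h ↦ hdisj _ _ (by simpa using h)⟩

lemma ContainsLinearPath.mono (h : ContainsLinearPath k ℓ H) (hHE : H ⊆ E) :
    ContainsLinearPath k ℓ E := by
  obtain ⟨P, hinj, hPH, hP⟩ := h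
  exact ⟨P, hinj, fun i ↦ hHE (hPH i), hP⟩

lemma containsLinearPath_of_two_kernel_vertices (hk : 2 ≤ k)
    (hE : (E : Set (Finset (Fin n))).Sized k) (hne : E.Nonempty)
    (hker : ∀ F ∈ E, ∃ y ∈ F, ∃ z ∈ F, y ≠ z ∧ IsKernel w E {y} ∧ IsKernel w E {z})
    (hw : k * ℓ ≤ w) : ContainsLinearPath k ℓ E := by
  obtain ⟨P, hP, hPE, -⟩ := exists_isLinearPath_of_two_kernel_vertices hE hne hker hw
  exact (hP.containsLinearPath hk hE hPE).of_succ

lemma containsLinearPath_of_isPath_kernelGraph (hk : 2 ≤ k)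
    (hE : (E : Set (Finset (Fin n))).Sized k) {u v : Fin n} {p : (kernelGraph w E).Walk u v}
    (hp : p.IsPath) (hw : (k + 1) * p.length + 1 ≤ w) : ContainsLinearPath k p.length E := by
  have hU : #p.support.toFinset ≤ p.length + 1 := by
    simpa using List.toFinset_card_le p.support
  obtain ⟨P, hP, hPE, -⟩ := exists_isLinearPath_of_isPath_kernelGraph hE hp
    (U := p.support.toFinset) (fun x hx ↦ List.mem_toFinset.2 hx) (by
      rw [add_mul] at hw
      omega)
  exact hP.containsLinearPath hk hE hPE

end ContainsLinearPath

section Stars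

variable {V : Type*} [DecidableEq V] {Γ : SimpleGraph V} {w k s t : ℕ} {H K : Finset (Finset V)}
  {T : Finset V} {x : Finset V → V}

/-- The vertex `x` of `F` is joined in `Γ` to all other vertices of `F`, so that `F` spans a star
centred at `x`. -/
def IsStarCenter (Γ : SimpleGraph V) (F : Finset V) (x : V) : Prop :=
  x ∈ F ∧ ∀ b ∈ F.erase x, Γ.Adj x b

lemma exists_mem_avoiding_of_isKernelCovered {F U : Finset V} {b : V} (hk : 4 ≤ k)
    (hH : (H : Set (Finset V)).Sized k) (hT : ∀ F ∈ H, #(F ∩ T) = 1) (hF : F ∈ H)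
    (hcov : IsKernelCovered w 2 H F) (hb : b ∈ F) (hU : #U ≤ w) :
    ∃ F' ∈ H, b ∈ F' ∧ ∃ b' ∈ F' \ T, b' ∉ U := by
  obtain ⟨x, hx⟩ := card_eq_one.1 (hT F hF)
  obtain ⟨hxF, hxT⟩ : x ∈ F ∧ x ∈ T := mem_inter.1 (hx ▸ mem_singleton_self x)
  obtain ⟨A, hbxA, hAF, hA⟩ := exists_subsuperset_card_eq (s := {b, x}) (n := k - 2)
    (insert_subset hb (singleton_subset_iff.2 hxF)) (card_le_two.trans (by omega))
    (by rw [hH hF]; omega)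
  obtain ⟨B, hAB, hBF, hB⟩ := hcov A hAF (by rw [hA, hH hF]; omega)
  obtain ⟨F', hF', hBF', hinter⟩ := hB U hU
  obtain ⟨b', hb'F', hb'B⟩ : ∃ b' ∈ F', b' ∉ B :=
    exists_mem_notMem_of_card_lt_card ((card_lt_card hBF).trans_eq ((hH hF).trans (hH hF').symm))
  obtain ⟨hbB, hxB⟩ : b ∈ B ∧ x ∈ B := by
    simpa [insert_subset_iff] using hbxA.trans hAB
  refine ⟨F', hF', hBF' hbB, b', mem_sdiff.2 ⟨hb'F', fun hb'T ↦ hb'B ?_⟩, fun hb'U ↦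
    hb'B (hinter (mem_inter.2 ⟨hb'F', hb'U⟩))⟩
  rwa [card_le_one.1 (hT F' hF').le b' (mem_inter.2 ⟨hb'F', hb'T⟩) x
    (mem_inter.2 ⟨hBF' hxB, hxT⟩)]

-- A path from `b ∈ F \ T` is prolonged inside another member of `H` which shares `b` and the unique
-- vertex of `F ∩ T` with `F` and has a new vertex: any unused `y ∈ T` joined to both `b` and that
-- new vertex provides the next two edges.
lemma exists_isPath_of_isKernelCovered (hk : 4 ≤ k) (hH : (H : Set (Finset V)).Sized k)
    (hne : H.Nonempty) (hcov : ∀ F ∈ H, IsKernelCovered (2 * s) 2 H F)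
    (hT : ∀ F ∈ H, #(F ∩ T) = 1)
    (hadj : ∀ F ∈ H, ∃ X ⊆ T, #X = s ∧ ∀ y ∈ X, ∀ b ∈ F \ T, Γ.Adj y b) {m : ℕ} (hm : m ≤ s) :
    ∃ F ∈ H, ∃ b ∈ F \ T, ∃ (v : V) (p : Γ.Walk b v), p.IsPath ∧ p.length = 2 * m ∧
      #(p.support.toFinset ∩ T) ≤ m := by
  induction m with
  | zero =>
    obtain ⟨F, hF⟩ := hne
    obtain ⟨b, hb⟩ : (F \ T).Nonempty := by
      rw [← card_pos, card_sdiff, inter_comm, hT F hF, hH hF]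
      omega
    exact ⟨F, hF, b, hb, b, .nil, .nil, rfl, by simp [(mem_sdiff.1 hb).2]⟩
  | succ m ih =>
    obtain ⟨F, hF, b, hb, v, p, hp, hlen, hpT⟩ := ih (by omega)
    obtain ⟨hbF, hbT⟩ := mem_sdiff.1 hb
    obtain ⟨F', hF', hbF', b', hb', hb'p⟩ : ∃ F' ∈ H, b ∈ F' ∧
        ∃ b' ∈ F' \ T, b' ∉ p.support.toFinset :=
      exists_mem_avoiding_of_isKernelCovered hk hH hT hF (hcov F hF) hbF
        (p.support.toFinset_card_le.trans (by rw [p.length_support]; omega))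
    rw [List.mem_toFinset] at hb'p
    obtain ⟨X, hXT, hXcard, hX⟩ := hadj F' hF'
    obtain ⟨y, hyX, hyp⟩ : ∃ y ∈ X, y ∉ p.support.toFinset ∩ T :=
      exists_mem_notMem_of_card_lt_card (by omega)
    have hyT : y ∈ T := hXT hyX
    have hyp : y ∉ p.support := fun h ↦ hyp (mem_inter.2 ⟨List.mem_toFinset.2 h, hyT⟩)
    have hb'y : b' ≠ y := fun h ↦ (mem_sdiff.1 hb').2 (h ▸ hyT)
    refine ⟨F', hF', b', hb', v, .cons (hX y hyX b' hb').symm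
      (.cons (hX y hyX b (mem_sdiff.2 ⟨hbF', hbT⟩)) p), ?_, ?_, ?_⟩
    · simp [SimpleGraph.Walk.cons_isPath_iff, hp, hyp, hb'y, hb'p]
    · simp [hlen, mul_add]
    · simp only [SimpleGraph.Walk.support_cons, List.toFinset_cons]
      rw [insert_inter_of_notMem (mem_sdiff.1 hb').2, insert_inter_of_mem hyT]
      exact (card_insert_le _ _).trans (by omega)

-- A random `T` separates the centres from the other vertices with probability at least
-- `2 ^ (-(k + s))`.
lemma exists_separated_subfamily [Finite V] (hK : (K : Set (Finset V)).Sized k)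
    (hx : ∀ F ∈ K, x F ∈ F)
    (hmany : ∀ F ∈ K, ∃ X : Finset V, #X = s ∧ ∀ y ∈ X, ∀ b ∈ F.erase (x F), Γ.Adj y b) :
    ∃ T : Finset V, ∃ G ⊆ K, #K ≤ 2 ^ (k + s) * #G ∧ ∀ F ∈ G, #(F ∩ T) = 1 ∧
      ∃ X ⊆ T, #X = s ∧ ∀ y ∈ X, ∀ b ∈ F \ T, Γ.Adj y b := by
  have := Fintype.ofFinite V
  choose! X hXcard hX using hmany
  obtain ⟨c, hc⟩ := exists_coloring_agreeing (α := Bool) (m := k + s) K (fun F ↦ F ∪ X F)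
    (fun F v ↦ decide (v = x F ∨ v ∈ X F)) fun F hF ↦
      (card_union_le _ _).trans_eq (by rw [hK hF, hXcard F hF])
  rw [Fintype.card_bool] at hc
  refine ⟨({v | c v = true} : Finset V), _, filter_subset _ _, hc, fun F hF ↦ ?_⟩
  obtain ⟨hFK, hcF⟩ := mem_filter.1 hF
  have hcx : ∀ v ∈ F, c v = true ↔ v = x F := fun v hv ↦ by
    rw [hcF v (mem_union_left _ hv), decide_eq_true_iff]
    refine or_iff_left_of_imp fun hvX ↦ by_contra fun hvx ↦ ?_
    exact (hX F hFK v hvX v (mem_erase.2 ⟨hvx, hv⟩)).ne rfl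
  refine ⟨card_eq_one.2 ⟨x F, ?_⟩, X F, fun y hy ↦ ?_, hXcard F hFK, fun y hy b hb ↦ ?_⟩
  · ext v
    simp only [mem_inter, mem_filter, mem_univ, true_and, mem_singleton]
    exact ⟨fun h ↦ (hcx v h.1).1 h.2, fun h ↦ h ▸ ⟨hx F hFK, (hcx _ (hx F hFK)).2 rfl⟩⟩
  · simp [hcF y (mem_union_right _ hy), hy]
  · simp only [mem_sdiff, mem_filter, mem_univ, true_and] at hb
    exact hX F hFK y hy b (mem_erase.2 ⟨fun h ↦ hb.2 ((hcx b hb.1).2 h), hb.1⟩)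

variable [Fintype V]

lemma card_le_of_few_common_neighbors (hK : (K : Set (Finset V)).Sized k)
    (hx : ∀ F ∈ K, IsStarCenter Γ F (x F))
    (hfew : ∀ F ∈ K, ∀ X : Finset V, (∀ y ∈ X, ∀ b ∈ F.erase (x F), Γ.Adj y b) → #X ≤ t) :
    #K ≤ t * (Fintype.card V).choose (k - 1) := by
  rw [← card_univ, ← card_powersetCard]
  refine card_le_mul_card_image_of_maps_to (f := fun F ↦ F.erase (x F)) (fun F hF ↦ ?_) _
    fun S _ ↦ ?_
  · rw [mem_powersetCard, card_erase_of_mem (hx F hF).1, hK hF]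
    exact ⟨subset_univ _, rfl⟩
  · set fiber := {F ∈ K | F.erase (x F) = S}
    have hmem : ∀ F ∈ fiber, F ∈ K ∧ F.erase (x F) = S := fun F hF ↦ mem_filter.1 hF
    have hinj : Set.InjOn x fiber := fun F hF F' hF' h ↦ by
      rw [← insert_erase (hx F (hmem F hF).1).1, ← insert_erase (hx F' (hmem F' hF').1).1,
        (hmem F hF).2, (hmem F' hF').2, h]
    rcases fiber.eq_empty_or_nonempty with hempty | ⟨F₀, hF₀⟩
    · simp [hempty]
    rw [← card_image_of_injOn hinj]
    refine hfew F₀ (hmem F₀ hF₀).1 _ (forall_mem_image.2 fun F hF ↦ ?_)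
    rw [(hmem F₀ hF₀).2, ← (hmem F hF).2]
    exact (hx F (hmem F hF).1).2

lemma card_le_of_many_common_neighbors (hk : 4 ≤ k) (hK : (K : Set (Finset V)).Sized k)
    (hx : ∀ F ∈ K, x F ∈ F)
    (hmany : ∀ F ∈ K, ∃ X : Finset V, #X = s ∧ ∀ y ∈ X, ∀ b ∈ F.erase (x F), Γ.Adj y b)
    (hpath : ∀ (u v : V) (p : Γ.Walk u v), p.IsPath → p.length ≠ 2 * s) :
    #K ≤ 2 ^ (k + s) * (homogeneityConst k (2 * s) 2 * (Fintype.card V).choose (k - 2)) := by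
  obtain ⟨T, G, hGK, hcard, hG⟩ := exists_separated_subfamily hK hx hmany
  refine hcard.trans (Nat.mul_le_mul_left _ (not_lt.1 fun hlarge ↦ ?_))
  obtain ⟨H, hHG, hne, hcov, -⟩ :=
    exists_homogeneous_covered_subfamily (by omega) (hK.mono hGK) hlarge
  obtain ⟨-, -, b, -, v, p, hp, hlen, -⟩ := exists_isPath_of_isKernelCovered hk
    (hK.mono (hHG.trans hGK)) hne hcov (fun F hF ↦ (hG F (hHG hF)).1)
    (fun F hF ↦ (hG F (hHG hF)).2) le_rfl
  exact hpath b v p hp hlen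

lemma card_le_of_forall_exists_isStarCenter (hk : 4 ≤ k) (hK : (K : Set (Finset V)).Sized k)
    (hstar : ∀ F ∈ K, ∃ x, IsStarCenter Γ F x)
    (hpath : ∀ (u v : V) (p : Γ.Walk u v), p.IsPath → p.length ≠ 2 * (t + 1)) :
    #K ≤ t * (Fintype.card V).choose (k - 1) + 2 ^ (k + (t + 1)) *
      (homogeneityConst k (2 * (t + 1)) 2 * (Fintype.card V).choose (k - 2)) := by
  classical
  rcases K.eq_empty_or_nonempty with rfl | ⟨F₀, hF₀⟩
  · simp
  have : Nonempty V := (hstar F₀ hF₀).nonempty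
  choose! x hx using hstar
  let many (F : Finset V) : Prop :=
    ∃ X : Finset V, #X = t + 1 ∧ ∀ y ∈ X, ∀ b ∈ F.erase (x F), Γ.Adj y b
  rw [← card_filter_add_card_filter_not (s := K) many, add_comm]
  have hsub (p : Finset V → Prop) [DecidablePred p] : K.filter p ⊆ K := filter_subset p K
  refine add_le_add (card_le_of_few_common_neighbors (Γ := Γ) (x := x) (hK.mono (hsub _)) ?_ ?_)
    (card_le_of_many_common_neighbors (Γ := Γ) (x := x) hk (hK.mono (hsub _)) ?_ ?_ hpath)
  · exact fun F hF ↦ hx F (hsub _ hF)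
  · intro F hF X hX
    by_contra! hcard
    obtain ⟨Y, hYX, hY⟩ := exists_subset_card_eq hcard
    exact (mem_filter.1 hF).2 ⟨Y, hY, fun y hy ↦ hX y (hYX hy)⟩
  · exact fun F hF ↦ (hx F (hsub _ hF)).1
  · exact fun F hF ↦ (mem_filter.1 hF).2

end Stars

section TuranBound

variable {V : Type*} [Fintype V] [DecidableEq V] {w k ℓ n : ℕ}

lemma exists_subfamily_two_kernel_vertices {E K : Finset (Finset V)} (hk : 4 ≤ k)
    (hK : (K : Set (Finset V)).Sized k) (hKE : K ⊆ E)
    (hstar : ∀ F ∈ K, ∀ x, ¬ IsStarCenter (kernelGraph w E) F x)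
    (hlarge : homogeneityConst k w 2 * (Fintype.card V).choose (k - 2) < #K) :
    ∃ H ⊆ K, H.Nonempty ∧
      ∀ F ∈ H, ∃ y ∈ F, ∃ z ∈ F, y ≠ z ∧ IsKernel w H {y} ∧ IsKernel w H {z} := by
  obtain ⟨H, hHK, hne, hcov, c, J, hbij, hhom⟩ :=
    exists_homogeneous_covered_subfamily (by omega) hK hlarge
  refine ⟨H, hHK, hne, fun F hF ↦ ?_⟩
  have hker : ∀ B ⊆ F, IsKernel w H B ↔ B.image c ∈ J := fun B ↦
    hhom.isKernel_iff_image_mem hF (hbij F hF).injOn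
  have hcolor : ∀ i, ∃ v ∈ F, c v = i := fun i ↦ (hbij F hF).surjOn (Set.mem_univ i)
  rcases exists_star_or_two_singletons_mem (by simpa using hk)
      (fun A hA B hB ↦ hhom.inter_mem hne hA hB)
      ((hhom.isKernelCovered_iff hF (hbij F hF)).1 (hcov F hF)) with
    ⟨i, hi⟩ | ⟨i, j, hij, hi, hj⟩
  · obtain ⟨x, hx, rfl⟩ := hcolor i
    refine absurd ⟨hx, fun b hb ↦ ?_⟩ (hstar F (hHK hF) x)
    obtain ⟨hbx, hbF⟩ := mem_erase.1 hb
    refine ⟨hbx.symm, IsKernel.mono ((hker {x, b} ?_).2 ?_) (hHK.trans hKE)⟩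
    · simp [insert_subset_iff, hx, hbF]
    · simpa using hi (c b)
  · obtain ⟨y, hy, rfl⟩ := hcolor i
    obtain ⟨z, hz, rfl⟩ := hcolor j
    refine ⟨y, hy, z, hz, ne_of_apply_ne c hij, (hker {y} ?_).2 ?_, (hker {z} ?_).2 ?_⟩ <;>
      simpa

lemma card_le_of_forall_not_isStarCenter {E K : Finset (Finset (Fin n))} (hk : 4 ≤ k)
    (hE : (E : Set (Finset (Fin n))).Sized k) (hfree : ¬ ContainsLinearPath k ℓ E)
    (hw : k * ℓ ≤ w) (hKE : K ⊆ E)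
    (hstar : ∀ F ∈ K, ∀ x, ¬ IsStarCenter (kernelGraph w E) F x) :
    #K ≤ homogeneityConst k w 2 * n.choose (k - 2) := by
  by_contra! hlarge
  obtain ⟨H, hHK, hne, hker⟩ :=
    exists_subfamily_two_kernel_vertices hk (hE.mono hKE) hKE hstar (by simpa using hlarge)
  have hHE : H ⊆ E := hHK.trans hKE
  exact hfree ((containsLinearPath_of_two_kernel_vertices (by omega) (hE.mono hHE) hne hker
    hw).mono hHE)

lemma choose_le_choose_pred_add_pow (n r : ℕ) :
    n.choose r ≤ (n - 1).choose r + n ^ (r - 1) := by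
  rcases n with - | n
  · simp
  rcases r with - | r
  · simp
  calc (n + 1).choose (r + 1) = n.choose (r + 1) + n.choose r := by
        rw [Nat.choose_succ_succ, add_comm]
    _ ≤ n.choose (r + 1) + (n + 1) ^ r := by
      gcongr
      exact (Nat.choose_le_choose r n.le_succ).trans (Nat.choose_le_pow _ _)

/-- The constant in the error term of `card_le_of_not_containsLinearPath`: `t` comes from replacing
`n` by `n - 1` in the main term, the other two terms count the star edges whose leaves have `t + 1`
common neighbours and the edges that are not stars. -/
def errorConst (k t : ℕ) : ℕ :=
  t + 2 ^ (k + (t + 1)) * homogeneityConst k (2 * (t + 1)) 2 +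
    homogeneityConst k ((k + 1) * (2 * t + 2) + 1) 2

lemma card_le_of_not_containsLinearPath {t : ℕ} {E : Finset (Finset (Fin n))} (hk : 4 ≤ k)
    (hE : (E : Set (Finset (Fin n))).Sized k) (hfree : ¬ ContainsLinearPath k (2 * t + 2) E) :
    #E ≤ t * (n - 1).choose (k - 1) + errorConst k t * n ^ (k - 2) := by
  classical
  let w := (k + 1) * (2 * t + 2) + 1
  let star (F : Finset (Fin n)) : Prop := ∃ x, IsStarCenter (kernelGraph w E) F x
  have hpath : ∀ (u v : Fin n) (p : (kernelGraph w E).Walk u v), p.IsPath →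
      p.length ≠ 2 * (t + 1) := fun u v p hp hlen ↦ hfree <| by
    have h := containsLinearPath_of_isPath_kernelGraph (by omega) hE hp (by rw [hlen]; rfl)
    rwa [hlen] at h
  have hstar : #{F ∈ E | star F} ≤ t * n.choose (k - 1) + 2 ^ (k + (t + 1)) *
      (homogeneityConst k (2 * (t + 1)) 2 * n.choose (k - 2)) := by
    simpa using card_le_of_forall_exists_isStarCenter hk (hE.mono (filter_subset _ _))
      (fun F hF ↦ (mem_filter.1 hF).2) hpath
  have hnonstar : #{F ∈ E | ¬ star F} ≤ homogeneityConst k w 2 * n.choose (k - 2) :=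
    card_le_of_forall_not_isStarCenter hk hE hfree (by simp only [w]; nlinarith)
      (filter_subset _ _) fun F hF ↦ not_exists.1 (mem_filter.1 hF).2
  have hchoose : n.choose (k - 2) ≤ n ^ (k - 2) := Nat.choose_le_pow _ _
  calc #E = #{F ∈ E | star F} + #{F ∈ E | ¬ star F} :=
        (card_filter_add_card_filter_not star).symm
    _ ≤ t * n.choose (k - 1) + 2 ^ (k + (t + 1)) *
          (homogeneityConst k (2 * (t + 1)) 2 * n.choose (k - 2)) +
        homogeneityConst k w 2 * n.choose (k - 2) := add_le_add hstar hnonstar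
    _ ≤ t * ((n - 1).choose (k - 1) + n ^ (k - 2)) + 2 ^ (k + (t + 1)) *
          (homogeneityConst k (2 * (t + 1)) 2 * n ^ (k - 2)) +
        homogeneityConst k w 2 * n ^ (k - 2) := by
      gcongr
      exact choose_le_choose_pred_add_pow n (k - 1)
    _ = t * (n - 1).choose (k - 1) + errorConst k t * n ^ (k - 2) := by
      simp only [errorConst, w]
      ring

lemma exLinear_le_exLinear_succ (k ℓ n : ℕ) : exLinear k ℓ n ≤ exLinear k (ℓ + 1) n := by
  refine csSup_le_csSup' ⟨#(univ : Finset (Finset (Fin n))), ?_⟩ ?_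
  · rintro m ⟨F, -, -, rfl⟩
    exact card_le_univ F
  · rintro m ⟨F, hF, hfree, rfl⟩
    exact ⟨F, hF, fun h ↦ hfree h.of_succ, rfl⟩

lemma exLinear_two_mul_add_two_le (hk : 4 ≤ k) (t n : ℕ) :
    exLinear k (2 * t + 2) n ≤ t * (n - 1).choose (k - 1) + errorConst k t * n ^ (k - 2) := by
  refine csSup_le' ?_
  rintro m ⟨F, hF, hfree, rfl⟩
  exact card_le_of_not_containsLinearPath hk (fun A hA ↦ hF A hA) hfree

end TuranBound

/-- Theorem 4.5 (asymptotic bound): for k ≥ 4 and t ≥ 1 there is a constant C such that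
for every positive n, ex_k(n, P^{(k)}_{2t+1}) ≤ ex_k(n, P^{(k)}_{2t+2})
≤ t·C(n-1,k-1) + C·n^{k-2}. -/
theorem turan_linear_path_asymptotic (k t : ℕ) (hk : 4 ≤ k) (ht : 1 ≤ t) :
    ∃ C : ℝ, 0 < C ∧ ∀ n : ℕ, 0 < n →
      exLinear k (2 * t + 1) n ≤ exLinear k (2 * t + 2) n ∧
      (exLinear k (2 * t + 2) n : ℝ) ≤
        t * ((n - 1).choose (k - 1)) + C * (n : ℝ) ^ (k - 2) := by
  refine ⟨errorConst k t, ?_, fun n _ ↦ ⟨exLinear_le_exLinear_succ k _ n, ?_⟩⟩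
  · rw [Nat.cast_pos, errorConst]
    omega
  · exact_mod_cast exLinear_two_mul_add_two_le hk t n
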